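/- Let f ∈ Hol(α) be a bounded α-Hölder potential. Then there exists a unique Borel probability measure ν on X and a number λ > 0 such that ∫_X L_f φ dν = λ·∫_X φ dν for every φ ∈ C_b(X,ℝ) (that is, L_f^*ν = λν); moreover λ = ∫_X L_f 1 dν. -/

import Mathlib

open MeasureTheory Filter Topology BoundedContinuousFunction

noncomputable section

variable {E : Type*} [MetricSpace E]

/-- The metric on the sequence space `X = E^ℕ`:
`d_X(x,y) = ∑_{n=1}^∞ 2⁻ⁿ · min(d_E(x_n,y_n), 1)`. -/
def dX (x y : ℕ → E) : ℝ :=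
  ∑' n : ℕ, ((1 : ℝ) / 2) ^ (n + 1) * min (dist (x n) (y n)) 1

/-- The left shift `σ(x₁,x₂,x₃,…) = (x₂,x₃,…)`. -/
def shift (x : ℕ → E) : ℕ → E := fun n => x (n + 1)

theorem continuous_shift : Continuous (shift (E := E)) :=
  continuous_pi fun n => continuous_apply (n + 1)

/-- Prepending one symbol: `ax = (a, x₁, x₂, …)`. -/
def cons (a : E) (x : ℕ → E) : ℕ → E := fun n => Nat.casesOn n a x

/-- Prepending a finite word `a = (a₁,…,a_n)`. -/
def prepend {n : ℕ} (a : Fin n → E) (x : ℕ → E) : ℕ → E :=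
  fun k => if h : k < n then a ⟨k, h⟩ else x (k - n)

/-- Birkhoff sums `f_n = ∑_{k=0}^{n-1} f ∘ σᵏ`. -/
def birkhoff (f : (ℕ → E) → ℝ) (n : ℕ) (x : ℕ → E) : ℝ :=
  ∑ k ∈ Finset.range n, f (shift^[k] x)

/-- Boundedness of a real-valued function on `X`. -/
def Bdd (g : (ℕ → E) → ℝ) : Prop := ∃ M : ℝ, ∀ x, |g x| ≤ M

/-- `g` is `α`-Hölder with constant `C` (w.r.t. the metric `dX`). -/
def HolderConst (α C : ℝ) (g : (ℕ → E) → ℝ) : Prop :=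
  ∀ x y, |g x - g y| ≤ C * dX x y ^ α

/-- `g ∈ Hol(α)`: bounded, continuous and `α`-Hölder. -/
def MemHol (α : ℝ) (g : (ℕ → E) → ℝ) : Prop :=
  Continuous g ∧ Bdd g ∧ ∃ C : ℝ, HolderConst α C g

/-- `g ∈ C_b(X,ℝ)`: bounded and continuous. -/
def MemCb (g : (ℕ → E) → ℝ) : Prop := Continuous g ∧ Bdd g

/-- The Hölder seminorm `D_α(g) = sup_{x ≠ y} |g x - g y| / d_X(x,y)^α`. -/
def Dalpha (α : ℝ) (g : (ℕ → E) → ℝ) : ℝ :=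
  sSup {r : ℝ | ∃ x y : ℕ → E, x ≠ y ∧ r = |g x - g y| / dX x y ^ α}

/-- The supremum norm `‖g‖_∞`. -/
def supNorm (g : (ℕ → E) → ℝ) : ℝ := ⨆ x : ℕ → E, |g x|

/-- The Hölder norm `‖g‖_α = ‖g‖_∞ + D_α(g)`. -/
def alphaNorm (α : ℝ) (g : (ℕ → E) → ℝ) : ℝ := supNorm g + Dalpha α g

variable [MeasurableSpace E] [BorelSpace E]

/-- The Ruelle transfer operator `L_f φ(x) = ∫_E e^{f(ax)} φ(ax) dp(a)`. -/
def ruelle (p : Measure E) (f φ : (ℕ → E) → ℝ) : (ℕ → E) → ℝ :=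
  fun x => ∫ a, Real.exp (f (cons a x)) * φ (cons a x) ∂p

/-- The normalized operators `P^m_n(φ) = L_f^m(φ · L_f^n 1) / L_f^{m+n} 1`. -/
def Pmn (p : Measure E) (f : (ℕ → E) → ℝ) (m n : ℕ) (φ : (ℕ → E) → ℝ) : (ℕ → E) → ℝ :=
  fun x => (ruelle p f)^[m] (fun y => φ y * (ruelle p f)^[n] (fun _ => 1) y) x /
    (ruelle p f)^[m + n] (fun _ => 1) x

/-- The equivalent bounded metric `d̄(x,y) = min{1, 4 C_f d_X(x,y)^α}`. -/
def dbar (Cf α : ℝ) (x y : ℕ → E) : ℝ := min 1 (4 * Cf * dX x y ^ α)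

/-- The Wasserstein distance associated to `d̄`, via Kantorovich duality. -/
def wass (Cf α : ℝ) (μ₁ μ₂ : Measure (ℕ → E)) : ℝ :=
  sSup {r : ℝ | ∃ g : (ℕ → E) → ℝ,
    (∀ x y, |g x - g y| ≤ dbar Cf α x y) ∧ r = (∫ x, g x ∂μ₁) - ∫ x, g x ∂μ₂}

section Aux

set_option linter.unusedSectionVars false
set_option linter.unusedVariables false



variable {E : Type*} [MetricSpace E]

lemma dX_summable (x y : ℕ → E) :
    Summable fun n : ℕ => ((1 : ℝ) / 2) ^ (n + 1) * min (dist (x n) (y n)) 1 := by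
  refine Summable.of_nonneg_of_le (fun n => by positivity) (fun n => ?_)
    ((summable_geometric_two).mul_right (1 / 2 : ℝ))
  calc ((1 : ℝ) / 2) ^ (n + 1) * min (dist (x n) (y n)) 1 ≤ ((1 : ℝ) / 2) ^ (n + 1) * 1 := by
        gcongr; exact min_le_right _ _
    _ = _ := by rw [mul_one, pow_succ]

lemma dX_nonneg (x y : ℕ → E) : 0 ≤ dX x y := tsum_nonneg fun n => by positivity

lemma dX_le_one (x y : ℕ → E) : dX x y ≤ 1 := by
  have h : HasSum (fun n : ℕ => ((1 : ℝ) / 2) ^ (n + 1)) 1 := by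
    have := (hasSum_geometric_two).mul_right (1 / 2 : ℝ)
    simpa [pow_succ] using this
  rw [← h.tsum_eq]
  refine (dX_summable x y).tsum_le_tsum (fun n => ?_) h.summable
  exact mul_le_of_le_one_right (by positivity) (min_le_right _ _)

lemma dX_cons (a : E) (x y : ℕ → E) : dX (cons a x) (cons a y) = dX x y * (1 / 2) := by
  have h0 : dX (cons a x) (cons a y) = ((1 : ℝ) / 2) ^ (0 + 1) * min (dist a a) 1 +
      ∑' n : ℕ, ((1 : ℝ) / 2) ^ (n + 1 + 1) * min (dist (x n) (y n)) 1 :=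
    (dX_summable (cons a x) (cons a y)).tsum_eq_zero_add
  rw [h0, dist_self, dX, ← tsum_mul_right]
  simp only [zero_le_one, inf_of_le_left, mul_zero, zero_add]
  congr 1; ext n
  rw [pow_succ _ (n + 1)]; ring

lemma continuous_cons : Continuous (fun q : E × (ℕ → E) => cons q.1 q.2) := by
  refine continuous_pi fun n => ?_
  cases n with
  | zero => exact continuous_fst
  | succ n => exact (continuous_apply n).comp continuous_snd

/-- Nonnegative functions that are log-Hölder along points sharing the first `k` symbols. -/
def LCone (α K : ℝ) (k : ℕ) (φ : (ℕ → E) → ℝ) : Prop :=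
  MemCb φ ∧ (∀ x, 0 ≤ φ x) ∧
    ∀ x y, (∀ i < k, x i = y i) → φ x ≤ Real.exp (K * dX x y ^ α) * φ y

lemma LCone.mono {α K K' : ℝ} {k : ℕ} {φ : (ℕ → E) → ℝ} (h : LCone α K k φ) (hK : K ≤ K') :
    LCone α K' k φ := by
  refine ⟨h.1, h.2.1, fun x y hxy => (h.2.2 x y hxy).trans ?_⟩
  have := dX_nonneg x y
  have := h.2.1 y
  gcongr

lemma memCb_const (c : ℝ) : MemCb (fun _ : ℕ → E => c) := ⟨continuous_const, |c|, fun _ => le_rfl⟩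

lemma MemCb.sub_mul {φ ψ : (ℕ → E) → ℝ} (h : MemCb φ) (h' : MemCb ψ) (t : ℝ) :
    MemCb (fun x => φ x - t * ψ x) := by
  obtain ⟨hc, M, hM⟩ := h
  obtain ⟨hc', M', hM'⟩ := h'
  refine ⟨by fun_prop, M + |t| * M', fun x => ?_⟩
  calc |φ x - t * ψ x| ≤ |φ x| + |t * ψ x| := abs_sub _ _
    _ ≤ _ := by rw [abs_mul]; gcongr; exacts [hM x, hM' x]

lemma MemCb.exp_mul {φ ψ : (ℕ → E) → ℝ} (h : MemCb φ) (h' : MemCb ψ) :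
    MemCb (fun x => Real.exp (φ x) * ψ x) := by
  obtain ⟨hc, M, hM⟩ := h
  obtain ⟨hc', M', hM'⟩ := h'
  refine ⟨by fun_prop, Real.exp M * M', fun x => ?_⟩
  rw [abs_mul, abs_of_pos (Real.exp_pos _)]
  have := (abs_le.1 (hM x)).2
  gcongr
  exact hM' x

variable [SecondCountableTopology E] [MeasurableSpace E] [BorelSpace E]

lemma MemCb.integrable {φ : (ℕ → E) → ℝ} (h : MemCb φ) (μ : Measure (ℕ → E)) [IsFiniteMeasure μ] :
    Integrable φ μ := by
  obtain ⟨hc, M, hM⟩ := h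
  exact Integrable.of_bound hc.aestronglyMeasurable M (ae_of_all _ hM)

lemma MemCb.integrable_cons {φ : (ℕ → E) → ℝ} (h : MemCb φ) (p : Measure E) [IsFiniteMeasure p]
    (x : ℕ → E) : Integrable (fun a => φ (cons a x)) p := by
  obtain ⟨hc, M, hM⟩ := h
  refine Integrable.of_bound (Continuous.aestronglyMeasurable ?_) M (ae_of_all _ fun _ => hM _)
  exact hc.comp (continuous_cons.comp (by fun_prop : Continuous fun a : E => (a, x)))

variable (p : Measure E) [IsProbabilityMeasure p]

lemma memCb_ruelle {f φ : (ℕ → E) → ℝ} (hf : MemCb f) (hφ : MemCb φ) :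
    MemCb (ruelle p f φ) := by
  have h := hf.exp_mul hφ
  obtain ⟨hc, M, hM⟩ := id h
  refine ⟨?_, M, fun x => ?_⟩
  · refine continuous_of_dominated (bound := fun _ => M) (fun x => ?_) (fun x => ?_) (by simp) ?_
    · exact (h.integrable_cons p x).aestronglyMeasurable
    · exact ae_of_all _ fun a => hM _
    · exact ae_of_all _ fun a =>
        hc.comp (continuous_cons.comp (by fun_prop : Continuous fun x : ℕ → E => (a, x)))
  · have := norm_integral_le_of_norm_le_const (μ := p) (C := M)
      (f := fun a => Real.exp (f (cons a x)) * φ (cons a x)) (ae_of_all _ fun a => hM _)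
    simpa [ruelle] using this

lemma ruelle_mono {f φ ψ : (ℕ → E) → ℝ} (hf : MemCb f) (hφ : MemCb φ) (hψ : MemCb ψ)
    (h : ∀ x, φ x ≤ ψ x) (x : ℕ → E) : ruelle p f φ x ≤ ruelle p f ψ x := by
  refine integral_mono ((hf.exp_mul hφ).integrable_cons p x)
    ((hf.exp_mul hψ).integrable_cons p x) fun a => ?_
  have := h (cons a x)
  dsimp only
  gcongr

lemma ruelle_const_mul (f φ : (ℕ → E) → ℝ) (c : ℝ) (x : ℕ → E) :
    ruelle p f (fun x => c * φ x) x = c * ruelle p f φ x := by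
  unfold ruelle
  rw [← integral_const_mul]
  congr 1; ext a; ring

lemma ruelle_sub_mul {f φ ψ : (ℕ → E) → ℝ} (hf : MemCb f) (hφ : MemCb φ) (hψ : MemCb ψ)
    (t : ℝ) (x : ℕ → E) :
    ruelle p f (fun x => φ x - t * ψ x) x = ruelle p f φ x - t * ruelle p f ψ x := by
  unfold ruelle
  rw [← integral_const_mul, ← integral_sub ((hf.exp_mul hφ).integrable_cons p x)
    (((hf.exp_mul hψ).integrable_cons p x).const_mul t)]
  congr 1; ext a; ring

lemma MemCb.const_mul {φ : (ℕ → E) → ℝ} (h : MemCb φ) (c : ℝ) : MemCb (fun x => c * φ x) := by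
  have := (memCb_const (E := E) 0).sub_mul h (-c)
  simpa using this

lemma ruelle_nonneg {f φ : (ℕ → E) → ℝ} (h : ∀ x, 0 ≤ φ x) (x : ℕ → E) :
    0 ≤ ruelle p f φ x :=
  integral_nonneg fun a => mul_nonneg (Real.exp_pos _).le (h _)

lemma LCone.step {α C K : ℝ} {k : ℕ} {f φ : (ℕ → E) → ℝ} (hα : 0 < α)
    (hf : MemCb f) (hC : HolderConst α C f)
    (h : LCone α K k φ) : LCone α ((C + K) * (1 / 2 : ℝ) ^ α) (k - 1) (ruelle p f φ) := by
  refine ⟨memCb_ruelle p hf h.1, ruelle_nonneg p h.2.1, fun x y hxy => ?_⟩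
  unfold ruelle
  rw [← integral_const_mul]
  refine integral_mono ((hf.exp_mul h.1).integrable_cons p x)
    (((hf.exp_mul h.1).integrable_cons p y).const_mul _) fun a => ?_
  have h1 := h.2.2 (cons a x) (cons a y) (fun i hi => by
    cases i with
    | zero => rfl
    | succ i => exact hxy i (by omega))
  have h2 := (abs_le.1 (hC (cons a x) (cons a y))).2
  rw [dX_cons, Real.mul_rpow (dX_nonneg _ _) (by norm_num)] at h1 h2
  have h3 := h.2.1 (cons a y)
  dsimp only
  calc Real.exp (f (cons a x)) * φ (cons a x)
      ≤ Real.exp (f (cons a y) + C * (dX x y ^ α * (1 / 2) ^ α)) *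
        (Real.exp (K * (dX x y ^ α * (1 / 2) ^ α)) * φ (cons a y)) := by
        have h4 := h.2.1 (cons a x)
        gcongr
        linarith
    _ = Real.exp ((f (cons a y) + C * (dX x y ^ α * (1 / 2) ^ α)) +
          K * (dX x y ^ α * (1 / 2) ^ α)) * φ (cons a y) := by
      rw [← mul_assoc, ← Real.exp_add]
    _ = Real.exp ((C + K) * (1 / 2) ^ α * dX x y ^ α + f (cons a y)) * φ (cons a y) := by
      congr 2; ring
    _ = _ := by rw [Real.exp_add, mul_assoc]

/-- The constant in the cone comparison. -/
def conR (K K' : ℝ) : ℝ := (K + K') * Real.exp (K + K') / (K - K')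

lemma exp_ineq {K K' s : ℝ} (h0 : 0 ≤ K') (h1 : K' < K) (hs0 : 0 ≤ s) (hs1 : s ≤ 1) :
    Real.exp (K * s) - Real.exp (-(K' * s)) ≤
      conR K K' * (Real.exp (K * s) - Real.exp (K' * s)) := by
  have hd : 0 < K - K' := by linarith
  have hR : 0 ≤ conR K K' := by unfold conR; have : 0 ≤ K + K' := by linarith
                                positivity
  have a1 : (K - K') * s ≤ Real.exp (K * s) - Real.exp (K' * s) := by
    have e1 : Real.exp (K * s) = Real.exp (K' * s) * Real.exp ((K - K') * s) := by
      rw [← Real.exp_add]; congr 1; ring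
    have e2 := Real.add_one_le_exp ((K - K') * s)
    have e3 : 1 ≤ Real.exp (K' * s) := Real.one_le_exp (by positivity)
    have e4 : 0 ≤ (K - K') * s := by positivity
    rw [e1]; nlinarith
  have a2 : Real.exp (K * s) - Real.exp (-(K' * s)) ≤ (K + K') * Real.exp (K + K') * s := by
    set z := (K + K') * s with hz
    have hz0 : 0 ≤ z := by have : 0 ≤ K + K' := by linarith
                           positivity
    have e1 : Real.exp (K * s) = Real.exp (-(K' * s)) * Real.exp z := by
      rw [← Real.exp_add]; congr 1; rw [hz]; ring
    have e2 := Real.add_one_le_exp (-z)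
    have e3 : Real.exp (-(K' * s)) ≤ 1 := Real.exp_le_one_iff.2 (by
      have : 0 ≤ K' * s := by positivity
      linarith)
    have e4 : Real.exp (-z) * Real.exp z = 1 := by rw [← Real.exp_add]; simp
    have e5 := Real.exp_pos z
    have e6 : Real.exp z - 1 ≤ z * Real.exp z := by nlinarith
    have e7 : Real.exp z ≤ Real.exp (K + K') := by
      apply Real.exp_le_exp.2; rw [hz]; nlinarith
    have e8 : 1 ≤ Real.exp z := Real.one_le_exp hz0
    calc Real.exp (K * s) - Real.exp (-(K' * s)) = Real.exp (-(K' * s)) * (Real.exp z - 1) := by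
          rw [e1]; ring
      _ ≤ 1 * (Real.exp z - 1) := by
          apply mul_le_mul_of_nonneg_right e3; linarith
      _ ≤ z * Real.exp z := by linarith
      _ ≤ z * Real.exp (K + K') := by gcongr
      _ = _ := by rw [hz]; ring
  calc _ ≤ (K + K') * Real.exp (K + K') * s := a2
    _ = conR K K' * ((K - K') * s) := by unfold conR; field_simp
    _ ≤ _ := by gcongr

lemma one_le_conR {K K' : ℝ} (h0 : 0 ≤ K') (h1 : K' < K) : 1 ≤ conR K K' := by
  unfold conR
  rw [le_div_iff₀ (by linarith)]
  have := Real.one_le_exp (x := K + K') (by linarith)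
  nlinarith

lemma dX_comm (x y : ℕ → E) : dX x y = dX y x := by
  unfold dX; simp only [dist_comm]

lemma LCone.peel {α K K' t : ℝ} (hα : 0 < α) (h0 : 0 ≤ K') (h1 : K' < K) {u v : (ℕ → E) → ℝ}
    (hu : LCone α K' 0 u) (hv : LCone α K' 0 v) (ht : 0 ≤ t)
    (h : ∀ x, t * conR K K' * v x ≤ u x) : LCone α K 0 (fun x => u x - t * v x) := by
  have hR := one_le_conR h0 h1
  refine ⟨hu.1.sub_mul hv.1 t, fun x => ?_, fun x y _ => ?_⟩
  · have a1 := h x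
    have a2 : 0 ≤ t * v x := mul_nonneg ht (hv.2.1 x)
    nlinarith
  · have hs0 : 0 ≤ dX x y ^ α := Real.rpow_nonneg (dX_nonneg _ _) _
    have hs1 : dX x y ^ α ≤ 1 := Real.rpow_le_one (dX_nonneg _ _) (dX_le_one _ _) hα.le
    have b1 := hu.2.2 x y (by simp)
    have b2 := hv.2.2 y x (by simp)
    rw [dX_comm y x] at b2
    set s := dX x y ^ α
    have b3 := exp_ineq h0 h1 hs0 hs1
    have b4 : Real.exp (-(K' * s)) * Real.exp (K' * s) = 1 := by rw [← Real.exp_add]; simp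
    have b5 : Real.exp (K' * s) ≤ Real.exp (K * s) := by gcongr
    have b6 : Real.exp (-(K' * s)) * v y ≤ v x := by
      calc _ ≤ Real.exp (-(K' * s)) * (Real.exp (K' * s) * v x) := by gcongr
        _ = v x := by rw [← mul_assoc, b4, one_mul]
    have b7 := h y
    have b8 : 0 ≤ t * v y := mul_nonneg ht (hv.2.1 y)
    set a := Real.exp (K * s)
    set b := Real.exp (K' * s)
    set c := Real.exp (-(K' * s))
    have c1 : (a - b) * (t * conR K K' * v y) ≤ (a - b) * u y :=
      mul_le_mul_of_nonneg_left b7 (by linarith)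
    have c2 : (a - c) * (t * v y) ≤ (conR K K' * (a - b)) * (t * v y) :=
      mul_le_mul_of_nonneg_right b3 b8
    have c3 : t * (c * v y) ≤ t * v x := mul_le_mul_of_nonneg_left b6 ht
    nlinarith

/-- The contraction gain. -/
def conS (K J : ℝ) : ℝ := Real.exp (-(2 * K)) / conR K J

/-- The contraction rate. -/
def conT (K K' : ℝ) : ℝ := 1 / (1 + conS K K')

lemma conS_pos {K K' : ℝ} (h0 : 0 ≤ K') (h1 : K' < K) : 0 < conS K K' := by
  have := one_le_conR h0 h1
  unfold conS; positivity

lemma LCone.contract {α C K M : ℝ} {f : (ℕ → E) → ℝ} (hα : 0 < α)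
    (hf : MemCb f) (hC : HolderConst α C f) (h0 : 0 ≤ (C + K) * (1 / 2 : ℝ) ^ α)
    (h1 : (C + K) * (1 / 2 : ℝ) ^ α < K) {w v : (ℕ → E) → ℝ}
    (hw : LCone α K 0 w) (hv : LCone α K 0 v) (hM : 0 ≤ M) (hwv : ∀ x, w x ≤ M * v x) :
    ∃ t : ℝ, 0 ≤ t ∧ conT K ((C + K) * (1 / 2 : ℝ) ^ α) * M + t ≤ M ∧
      LCone α K 0 (fun x => ruelle p f w x - t * ruelle p f v x) ∧
      ∀ x, ruelle p f w x - t * ruelle p f v x ≤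
        conT K ((C + K) * (1 / 2 : ℝ) ^ α) * M * ruelle p f v x := by
  set K' := (C + K) * (1 / 2 : ℝ) ^ α with hK'
  have hR := one_le_conR h0 h1
  have hS := conS_pos h0 h1
  have hLw := hw.step p hα hf hC
  have hLv := hv.step p hα hf hC
  have hT : 0 < conT K K' := by unfold conT; positivity
  have hT1 : conT K K' + conS K K' * conT K K' = 1 := by unfold conT; field_simp
  by_cases hc : ∀ x, w x ≤ conT K K' * M * v x
  · refine ⟨0, le_rfl, ?_, ?_, fun x => ?_⟩
    · nlinarith [mul_nonneg (mul_nonneg hS.le hT.le) hM]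
    · simpa using hLw.mono h1.le
    · have := ruelle_mono p hf hw.1 (hv.1.const_mul (conT K K' * M)) hc x
      rw [ruelle_const_mul] at this
      simpa using this
  · push Not at hc
    obtain ⟨x₀, hx₀⟩ := hc
    refine ⟨conS K K' * conT K K' * M, by positivity, ?_, ?_, fun x => ?_⟩
    · nlinarith
    · refine LCone.peel hα h0 h1 hLw hLv (by positivity) fun x => ?_
      have hy : ∀ y, conS K K' * conT K K' * M * conR K K' * v y ≤ w y := by
        intro y
        have key : ∀ g : (ℕ → E) → ℝ, LCone α K 0 g → ∀ a b, g a ≤ Real.exp K * g b := by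
          intro g hg a b
          refine (hg.2.2 a b (by simp)).trans ?_
          have := hg.2.1 b
          have hs1 : dX a b ^ α ≤ 1 := Real.rpow_le_one (dX_nonneg _ _) (dX_le_one _ _) hα.le
          gcongr
          nlinarith
        have k1 := key w hw x₀ y
        have k2 := key v hv y x₀
        have k3 : conS K K' * conR K K' = Real.exp (-K) * Real.exp (-K) := by
          rw [← Real.exp_add]; unfold conS
          rw [div_mul_cancel₀ _ (by positivity)]; congr 1; ring
        have k4 : Real.exp (-K) * Real.exp K = 1 := by rw [← Real.exp_add]; simp
        calc conS K K' * conT K K' * M * conR K K' * v y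
            = (conS K K' * conR K K') * (conT K K' * M) * v y := by ring
          _ = Real.exp (-K) * Real.exp (-K) * (conT K K' * M) * v y := by rw [k3]
          _ ≤ Real.exp (-K) * Real.exp (-K) * (conT K K' * M) * (Real.exp K * v x₀) := by gcongr
          _ = Real.exp (-K) * (Real.exp (-K) * Real.exp K) * (conT K K' * M * v x₀) := by ring
          _ ≤ Real.exp (-K) * (Real.exp (-K) * Real.exp K) * w x₀ := by
            rw [k4]; gcongr
          _ ≤ Real.exp (-K) * (Real.exp (-K) * Real.exp K) * (Real.exp K * w y) := by
            rw [k4]; gcongr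
          _ = (Real.exp (-K) * Real.exp K) * (Real.exp (-K) * Real.exp K) * w y := by ring
          _ = w y := by rw [k4]; ring
      have := ruelle_mono p hf (hv.1.const_mul _) hw.1 hy x
      rwa [ruelle_const_mul] at this
    · have := ruelle_mono p hf hw.1 (hv.1.const_mul M) hwv x
      rw [ruelle_const_mul] at this
      have e : M * ruelle p f v x = conT K K' * M * ruelle p f v x +
          conS K K' * conT K K' * M * ruelle p f v x := by
        linear_combination (-M * ruelle p f v x) * hT1
      linarith

lemma memCb_iterate {f φ : (ℕ → E) → ℝ} (hf : MemCb f) (hφ : MemCb φ) (n : ℕ) :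
    MemCb ((ruelle p f)^[n] φ) := by
  induction n with
  | zero => exact hφ
  | succ n ih => rw [Function.iterate_succ_apply']; exact memCb_ruelle p hf ih

lemma LCone.iter {α C K : ℝ} {f : (ℕ → E) → ℝ} (hα : 0 < α)
    (hf : MemCb f) (hC : HolderConst α C f)
    (h1 : (C + K) * (1 / 2 : ℝ) ^ α < K) (n : ℕ) {k : ℕ} {v : (ℕ → E) → ℝ}
    (hv : LCone α K k v) : LCone α K (k - n) ((ruelle p f)^[n] v) := by
  induction n with
  | zero => exact hv
  | succ n ih =>
    rw [Function.iterate_succ_apply', Nat.sub_add_eq]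
    exact (ih.step p hα hf hC).mono h1.le

lemma LCone.converge {α C K M : ℝ} {f : (ℕ → E) → ℝ} (hα : 0 < α)
    (hf : MemCb f) (hC : HolderConst α C f) (h0 : 0 ≤ (C + K) * (1 / 2 : ℝ) ^ α)
    (h1 : (C + K) * (1 / 2 : ℝ) ^ α < K) {u v : (ℕ → E) → ℝ}
    (hu : LCone α K 0 u) (hv : LCone α K 0 v) (hM : 0 ≤ M) (huv : ∀ x, u x ≤ M * v x) :
    ∃ (c : ℝ) (ε : ℕ → ℝ), Tendsto ε atTop (𝓝 0) ∧ ∀ n x,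
      |(ruelle p f)^[n] u x - c * (ruelle p f)^[n] v x| ≤ ε n * (ruelle p f)^[n] v x := by
  set θ := conT K ((C + K) * (1 / 2 : ℝ) ^ α) with hθ
  have hS := conS_pos h0 h1
  have hθ0 : 0 ≤ θ := by rw [hθ]; unfold conT; positivity
  have hθ1 : θ < 1 := by
    rw [hθ]; unfold conT; rw [div_lt_one (by positivity)]; linarith
  let P : ℕ → ℝ → Prop := fun n c => c + θ ^ n * M ≤ M ∧
    LCone α K 0 (fun x => (ruelle p f)^[n] u x - c * (ruelle p f)^[n] v x) ∧
    ∀ x, (ruelle p f)^[n] u x - c * (ruelle p f)^[n] v x ≤ θ ^ n * M * (ruelle p f)^[n] v x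
  have base : P 0 0 := by
    refine ⟨by simp, by simpa using hu, fun x => by simpa using huv x⟩
  have step : ∀ n c, P n c → ∃ c', c ≤ c' ∧ P (n + 1) c' := by
    rintro n c ⟨q1, q2, q3⟩
    have hvn := hv.iter p hα hf hC h1 n
    rw [Nat.zero_sub] at hvn
    obtain ⟨t, ht, r1, r2, r3⟩ := q2.contract p hα hf hC h0 h1 hvn (by positivity) q3
    have e : ∀ x, ruelle p f (fun x => (ruelle p f)^[n] u x - c * (ruelle p f)^[n] v x) x
        - t * ruelle p f ((ruelle p f)^[n] v) x =
        (ruelle p f)^[n + 1] u x - (c + t) * (ruelle p f)^[n + 1] v x := by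
      intro x
      rw [ruelle_sub_mul p hf (memCb_iterate p hf hu.1 n) hvn.1, Function.iterate_succ_apply',
        Function.iterate_succ_apply']
      ring
    simp only [e] at r2 r3
    refine ⟨c + t, by linarith, ?_, r2, fun x => ?_⟩
    · rw [pow_succ]; linarith
    · have := r3 x
      rw [Function.iterate_succ_apply' _ n v] at this ⊢
      rw [pow_succ]; linarith
  choose g hg using step
  let s : ∀ n, {c // P n c} := fun n =>
    Nat.rec ⟨0, base⟩ (fun n q => ⟨g n q.1 q.2, (hg n q.1 q.2).2⟩) n
  let c : ℕ → ℝ := fun n => (s n).1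
  have hmono : Monotone c := monotone_nat_of_le_succ fun n => (hg n (s n).1 (s n).2).1
  have hbd : ∀ n, c n ≤ M := fun n => by
    have := (s n).2.1
    have : 0 ≤ θ ^ n * M := by positivity
    linarith
  have hlim := tendsto_atTop_ciSup hmono ⟨M, by rintro _ ⟨n, rfl⟩; exact hbd n⟩
  set c₀ := ⨆ n, c n
  refine ⟨c₀, fun n => θ ^ n * M + (c₀ - c n), ?_, fun n x => ?_⟩
  · have a1 := (tendsto_pow_atTop_nhds_zero_of_lt_one hθ0 hθ1).mul_const M
    have a2 := (tendsto_const_nhds (x := c₀)).sub hlim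
    simpa using a1.add a2
  · have b1 := (s n).2.2.1.2.1 x
    have b2 := (s n).2.2.2 x
    have b3 : c n ≤ c₀ := hmono.ge_of_tendsto hlim n
    have b4 := (hv.iter p hα hf hC h1 n).2.1 x
    have b5 : 0 ≤ θ ^ n * M * (ruelle p f)^[n] v x := by positivity
    change 0 ≤ (ruelle p f)^[n] u x - c n * (ruelle p f)^[n] v x at b1
    change (ruelle p f)^[n] u x - c n * (ruelle p f)^[n] v x ≤ _ at b2
    have b6 : 0 ≤ (c₀ - c n) * (ruelle p f)^[n] v x := mul_nonneg (by linarith) b4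
    rw [abs_le]
    constructor <;> nlinarith

/-- Uniform convergence `L^n φ / L^n 1 → c`. -/
lemma LCone.converge_one {α C K : ℝ} {k : ℕ} {f φ : (ℕ → E) → ℝ} (hα : 0 < α)
    (hf : MemCb f) (hC : HolderConst α C f) (h0 : 0 ≤ (C + K) * (1 / 2 : ℝ) ^ α)
    (h1 : (C + K) * (1 / 2 : ℝ) ^ α < K) (hφ : LCone α K k φ) :
    ∃ (c : ℝ) (ε : ℕ → ℝ), Tendsto ε atTop (𝓝 0) ∧ ∀ n x,
      |(ruelle p f)^[n + k] φ x - c * (ruelle p f)^[n + k] (fun _ => 1) x| ≤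
        ε n * (ruelle p f)^[n + k] (fun _ => 1) x := by
  have hone : LCone α K 0 (fun _ : ℕ → E => (1 : ℝ)) := by
    refine ⟨memCb_const 1, by simp, fun x y _ => ?_⟩
    have : 0 ≤ dX x y ^ α := Real.rpow_nonneg (dX_nonneg _ _) _
    rw [mul_one]
    exact Real.one_le_exp (mul_nonneg (by linarith) this)
  obtain ⟨M, hM⟩ := hφ.1.2
  have hu := hφ.iter p hα hf hC h1 k
  rw [Nat.sub_self] at hu
  have hv := hone.iter p hα hf hC h1 k
  rw [Nat.zero_sub] at hv
  have huv : ∀ n x, (ruelle p f)^[n] φ x ≤ |M| * (ruelle p f)^[n] (fun _ => 1) x := by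
    intro n
    induction n with
    | zero => intro x; simpa using ((le_abs_self _).trans (hM x)).trans (le_abs_self M)
    | succ n ih =>
      intro x
      rw [Function.iterate_succ_apply', Function.iterate_succ_apply', ← ruelle_const_mul]
      exact ruelle_mono p hf (memCb_iterate p hf hφ.1 n)
        ((memCb_iterate p hf (memCb_const 1) n).const_mul _) ih x
  obtain ⟨c, ε, hε, h⟩ := hu.converge p hα hf hC h0 h1 hv (abs_nonneg M) (huv k)
  refine ⟨c, ε, hε, fun n x => ?_⟩
  rw [Function.iterate_add_apply, Function.iterate_add_apply]
  exact h n x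

/-- The dual operator on measures. -/
def dualM (p : Measure E) (f : (ℕ → E) → ℝ) (μ : Measure (ℕ → E)) : Measure (ℕ → E) :=
  ((p.prod μ).map (fun q : E × (ℕ → E) => cons q.1 q.2)).withDensity
    (fun x => ENNReal.ofReal (Real.exp (f x)))

lemma measurable_cons : Measurable (fun q : E × (ℕ → E) => cons q.1 q.2) :=
  continuous_cons.measurable

lemma isFiniteMeasure_dualM {f : (ℕ → E) → ℝ} (hf : MemCb f) (μ : Measure (ℕ → E))
    [IsFiniteMeasure μ] : IsFiniteMeasure (dualM p f μ) := by
  have : MemCb (fun x => Real.exp (f x)) := by simpa using hf.exp_mul (memCb_const 1)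
  unfold dualM
  exact isFiniteMeasure_withDensity_ofReal (this.integrable _).2

lemma integral_dualM {f φ : (ℕ → E) → ℝ} (hf : MemCb f) (hφ : MemCb φ) (μ : Measure (ℕ → E))
    [IsFiniteMeasure μ] : ∫ x, φ x ∂(dualM p f μ) = ∫ x, ruelle p f φ x ∂μ := by
  have h := hf.exp_mul hφ
  unfold dualM
  rw [integral_withDensity_eq_integral_toReal_smul
    (by have := hf.1.measurable; fun_prop) (ae_of_all _ fun x => ENNReal.ofReal_lt_top)]
  simp only [ENNReal.toReal_ofReal (Real.exp_pos _).le, smul_eq_mul]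
  rw [integral_map measurable_cons.aemeasurable h.1.aestronglyMeasurable, integral_prod_symm]
  · rfl
  · obtain ⟨hc, M, hM⟩ := h
    exact Integrable.of_bound (hc.comp continuous_cons).aestronglyMeasurable M
      (ae_of_all _ fun _ => hM _)

lemma dualM_le {f : (ℕ → E) → ℝ} {B : ℝ} (hB : ∀ x, |f x| ≤ B) (μ : Measure (ℕ → E))
    {S : Set (ℕ → E)} (hS : MeasurableSet S) :
    dualM p f μ S ≤ ENNReal.ofReal (Real.exp B) *
      (p.prod μ) ((fun q : E × (ℕ → E) => cons q.1 q.2) ⁻¹' S) := by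
  unfold dualM
  rw [withDensity_apply _ hS, ← Measure.map_apply measurable_cons hS,
    ← setLIntegral_const]
  refine lintegral_mono fun x => ENNReal.ofReal_le_ofReal (Real.exp_le_exp.2 ?_)
  exact (abs_le.1 (hB x)).2

lemma le_dualM_univ {f : (ℕ → E) → ℝ} {B : ℝ} (hB : ∀ x, |f x| ≤ B) (μ : Measure (ℕ → E))
    [IsProbabilityMeasure μ] :
    ENNReal.ofReal (Real.exp (-B)) ≤ dualM p f μ Set.univ := by
  unfold dualM
  rw [withDensity_apply _ MeasurableSet.univ, Measure.restrict_univ]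
  have : IsProbabilityMeasure ((p.prod μ).map (fun q : E × (ℕ → E) => cons q.1 q.2)) :=
    Measure.isProbabilityMeasure_map measurable_cons.aemeasurable
  calc ENNReal.ofReal (Real.exp (-B)) = ∫⁻ x, ENNReal.ofReal (Real.exp (-B))
        ∂((p.prod μ).map (fun q : E × (ℕ → E) => cons q.1 q.2)) := by simp
    _ ≤ _ := lintegral_mono fun x => ENNReal.ofReal_le_ofReal
        (Real.exp_le_exp.2 (abs_le.1 (hB x)).1)

/-- The normalized dual operator. -/
def normM (p : Measure E) (f : (ℕ → E) → ℝ) (μ : Measure (ℕ → E)) : Measure (ℕ → E) :=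
  (dualM p f μ Set.univ)⁻¹ • dualM p f μ

lemma isProbabilityMeasure_normM {f : (ℕ → E) → ℝ} (hf : MemCb f) (μ : Measure (ℕ → E))
    [IsProbabilityMeasure μ] : IsProbabilityMeasure (normM p f μ) := by
  obtain ⟨B, hB⟩ := hf.2
  have h1 := le_dualM_univ p hB μ
  have := isFiniteMeasure_dualM p hf μ
  refine ⟨?_⟩
  simp only [normM, Measure.smul_apply, smul_eq_mul]
  refine ENNReal.inv_mul_cancel ?_ (measure_ne_top _ _)
  exact ((ENNReal.ofReal_pos.2 (Real.exp_pos _)).trans_le h1).ne'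

lemma integral_normM {f φ : (ℕ → E) → ℝ} (hf : MemCb f) (hφ : MemCb φ) (μ : Measure (ℕ → E))
    [IsFiniteMeasure μ] :
    ∫ x, φ x ∂(normM p f μ) = (∫ x, ruelle p f φ x ∂μ) / ∫ x, ruelle p f (fun _ => 1) x ∂μ := by
  have := isFiniteMeasure_dualM p hf μ
  unfold normM
  rw [integral_smul_measure, integral_dualM p hf hφ, ← integral_dualM p hf (memCb_const 1)]
  simp [Measure.real, div_eq_inv_mul]

/-- The approximating sequence of probability measures. -/
def seqM (p : Measure E) [IsProbabilityMeasure p] (f : (ℕ → E) → ℝ) (n : ℕ) : Measure (ℕ → E) :=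
  (normM p f)^[n] (Measure.infinitePi fun _ => p)

lemma isProbabilityMeasure_seqM {f : (ℕ → E) → ℝ} (hf : MemCb f) (n : ℕ) :
    IsProbabilityMeasure (seqM p f n) := by
  induction n with
  | zero => unfold seqM; simp only [Function.iterate_zero, id]; infer_instance
  | succ n ih =>
    unfold seqM at ih ⊢
    rw [Function.iterate_succ_apply']
    exact isProbabilityMeasure_normM p hf _

lemma normM_le {f : (ℕ → E) → ℝ} {B : ℝ} (hB : ∀ x, |f x| ≤ B) (μ : Measure (ℕ → E))
    [IsProbabilityMeasure μ] {S : Set (ℕ → E)} (hS : MeasurableSet S) :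
    normM p f μ S ≤ ENNReal.ofReal (Real.exp (2 * B)) *
      (p.prod μ) ((fun q : E × (ℕ → E) => cons q.1 q.2) ⁻¹' S) := by
  simp only [normM, Measure.smul_apply, smul_eq_mul]
  calc _ ≤ (ENNReal.ofReal (Real.exp (-B)))⁻¹ * (ENNReal.ofReal (Real.exp B) *
      (p.prod μ) ((fun q : E × (ℕ → E) => cons q.1 q.2) ⁻¹' S)) := by
        gcongr
        · exact le_dualM_univ p hB μ
        · exact dualM_le p hB μ hS
    _ = _ := by
      rw [← ENNReal.ofReal_inv_of_pos (Real.exp_pos _), ← mul_assoc,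
        ← ENNReal.ofReal_mul (by positivity), ← Real.exp_neg, ← Real.exp_add]
      congr 3; ring

lemma seqM_marginal {f : (ℕ → E) → ℝ} {B : ℝ} (hf : MemCb f) (hB0 : 0 ≤ B)
    (hB : ∀ x, |f x| ≤ B) (n j : ℕ)
    {A : Set E} (hA : MeasurableSet A) :
    seqM p f n ((fun x => x j) ⁻¹' A) ≤ ENNReal.ofReal (Real.exp (2 * B)) ^ (j + 1) * p A := by
  induction n generalizing j with
  | zero =>
    have h1 : seqM p f 0 ((fun x => x j) ⁻¹' A) = p A := by
      have := Measure.infinitePi_map_eval (fun _ : ℕ => p) j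
      conv_rhs => rw [← this]
      rw [Measure.map_apply (measurable_pi_apply j) hA]
      rfl
    rw [h1]
    refine le_mul_of_one_le_left zero_le (one_le_pow₀ ?_)
    rw [ENNReal.one_le_ofReal]
    exact Real.one_le_exp (by positivity)
  | succ n ih =>
    have hp := isProbabilityMeasure_seqM p hf n
    have e : seqM p f (n + 1) = normM p f (seqM p f n) := by
      unfold seqM; rw [Function.iterate_succ_apply']
    rw [e]
    refine (normM_le p hB _ (measurable_pi_apply j hA)).trans ?_
    cases j with
    | zero =>
      have : ((fun q : E × (ℕ → E) => cons q.1 q.2) ⁻¹' ((fun x => x 0) ⁻¹' A)) =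
          A ×ˢ Set.univ := by ext q; simp [cons]
      rw [this, Measure.prod_prod]; simp
    | succ j =>
      have : ((fun q : E × (ℕ → E) => cons q.1 q.2) ⁻¹' ((fun x => x (j + 1)) ⁻¹' A)) =
          Set.univ ×ˢ ((fun x => x j) ⁻¹' A) := by ext q; simp [cons]
      rw [this, Measure.prod_prod, pow_succ' _ (j + 1), measure_univ, one_mul, mul_assoc]
      gcongr
      exact ih j

lemma iterate_one_pos {f : (ℕ → E) → ℝ} (hf : MemCb f) (n : ℕ) :
    ∃ δ : ℝ, 0 < δ ∧ ∀ x, δ ≤ (ruelle p f)^[n] (fun _ => 1) x := by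
  obtain ⟨B, hB⟩ := hf.2
  induction n with
  | zero => exact ⟨1, one_pos, fun x => le_rfl⟩
  | succ n ih =>
    obtain ⟨δ, hδ, h⟩ := ih
    refine ⟨Real.exp (-B) * δ, by positivity, fun x => ?_⟩
    rw [Function.iterate_succ_apply']
    refine le_trans ?_ (ruelle_mono p hf (memCb_const δ)
      (memCb_iterate p hf (memCb_const 1) n) h x)
    unfold ruelle
    calc Real.exp (-B) * δ = ∫ a, Real.exp (-B) * δ ∂p := by simp
      _ ≤ _ := by
        refine integral_mono (integrable_const _) ((hf.exp_mul (memCb_const δ)).integrable_cons p x)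
          fun a => ?_
        have := (abs_le.1 (hB (cons a x))).1
        dsimp only
        gcongr

lemma integral_iterate_one_pos {f : (ℕ → E) → ℝ} (hf : MemCb f) (n : ℕ) (μ : Measure (ℕ → E))
    [IsProbabilityMeasure μ] : 0 < ∫ x, (ruelle p f)^[n] (fun _ => 1) x ∂μ := by
  obtain ⟨δ, hδ, h⟩ := iterate_one_pos p hf n
  calc 0 < δ := hδ
    _ = ∫ x, δ ∂μ := by simp
    _ ≤ _ := integral_mono (integrable_const _) ((memCb_iterate p hf (memCb_const 1) n).integrable μ) h

lemma integral_seqM {f φ : (ℕ → E) → ℝ} (hf : MemCb f) (hφ : MemCb φ) (n : ℕ) :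
    ∫ x, φ x ∂(seqM p f n) = (∫ x, (ruelle p f)^[n] φ x ∂(seqM p f 0)) /
      ∫ x, (ruelle p f)^[n] (fun _ => 1) x ∂(seqM p f 0) := by
  have hp0 := isProbabilityMeasure_seqM p hf 0
  induction n generalizing φ with
  | zero => simp
  | succ n ih =>
    have hp := isProbabilityMeasure_seqM p hf n
    have e : seqM p f (n + 1) = normM p f (seqM p f n) := by
      unfold seqM; rw [Function.iterate_succ_apply']
    rw [e, integral_normM p hf hφ, ih (memCb_ruelle p hf hφ),
      ih (memCb_ruelle p hf (memCb_const 1))]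
    rw [Function.iterate_succ_apply, Function.iterate_succ_apply]
    have := (integral_iterate_one_pos p hf n (seqM p f 0)).ne'
    rw [div_div_div_cancel_right₀ this]

/-- Measures agreeing on the cone functions are equal. -/
lemma ext_of_cone {α K : ℝ} (hK : 0 ≤ K) {μ ν : Measure (ℕ → E)} [IsFiniteMeasure μ]
    [IsFiniteMeasure ν]
    (h : ∀ k φ, LCone α K k φ → ∫ x, φ x ∂μ = ∫ x, φ x ∂ν) : μ = ν := by
  have hmain : ∀ I : Finset ℕ, ν.map I.restrict = μ.map I.restrict := by
    intro I
    have hI : Measurable (I.restrict (π := fun _ : ℕ => E)) := Finset.measurable_restrict I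
    have hIc : Continuous (I.restrict (π := fun _ : ℕ => E)) := Finset.continuous_restrict I
    have := Measure.isFiniteMeasure_map μ (I.restrict (π := fun _ : ℕ => E))
    have := Measure.isFiniteMeasure_map ν (I.restrict (π := fun _ : ℕ => E))
    refine ext_of_forall_integral_eq_of_IsFiniteMeasure fun g => ?_
    rw [integral_map hI.aemeasurable g.continuous.aestronglyMeasurable,
      integral_map hI.aemeasurable g.continuous.aestronglyMeasurable]
    have aux : ∀ c : ℝ, ∀ ψ : (ℕ → E) → ℝ, (∀ x, 0 ≤ ψ x) → ∀ k,
        (∀ x y, (∀ i < k, x i = y i) → ψ x = ψ y) → MemCb ψ → LCone α K k ψ := by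
      intro c ψ hψ k hk hc
      refine ⟨hc, hψ, fun x y hxy => ?_⟩
      rw [hk x y hxy]
      have : 0 ≤ dX x y ^ α := Real.rpow_nonneg (dX_nonneg _ _) _
      exact le_mul_of_one_le_left (hψ y) (Real.one_le_exp (mul_nonneg hK this))
    have hgb : MemCb (fun x => g (I.restrict x)) :=
      ⟨g.continuous.comp hIc, ‖g‖, fun x => g.norm_coe_le_norm _⟩
    have h1 := h (I.sup id + 1) (fun x => g (I.restrict x) - (-1) * ‖g‖) (by
      refine aux 0 _ (fun x => ?_) _ (fun x y hxy => ?_) (hgb.sub_mul (memCb_const ‖g‖) (-1))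
      · have := (abs_le.1 (g.norm_coe_le_norm (I.restrict x))).1
        linarith
      · have : I.restrict x = I.restrict y := by
          ext i
          exact hxy i (Nat.lt_succ_of_le (Finset.le_sup (f := id) i.2))
        rw [this])
    have h2 := h 0 (fun x => ‖g‖) (aux 0 _ (fun x => norm_nonneg g) _ (fun _ _ _ => rfl)
      (memCb_const _))
    rw [integral_sub (hgb.integrable _) (by simp), integral_sub (hgb.integrable _) (by simp),
      integral_const_mul, integral_const_mul, h2] at h1
    linarith
  exact IsProjectiveLimit.unique (P := fun I => μ.map I.restrict) (fun I => rfl) hmain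

lemma tight_seqM [CompleteSpace E] {f : (ℕ → E) → ℝ} (hf : MemCb f) :
    IsTightMeasureSet (Set.range (seqM p f)) := by
  obtain ⟨B₀, hB₀⟩ := hf.2
  obtain ⟨B, hB0, hB⟩ : ∃ B, 0 ≤ B ∧ ∀ x, |f x| ≤ B :=
    ⟨|B₀|, abs_nonneg _, fun x => (hB₀ x).trans (le_abs_self _)⟩
  rw [isTightMeasureSet_iff_exists_isCompact_measure_compl_le]
  intro ε hε
  obtain ⟨ε', hε', hsum⟩ := ENNReal.exists_pos_sum_of_countable' hε.ne' ℕ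
  have hp := isTightMeasureSet_iff_exists_isCompact_measure_compl_le.1
    (isTightMeasureSet_singleton (μ := p))
  set D := ENNReal.ofReal (Real.exp (2 * B)) with hD
  have hDt : D ≠ ⊤ := ENNReal.ofReal_ne_top
  have hD0 : D ≠ 0 := (ENNReal.ofReal_pos.2 (Real.exp_pos _)).ne'
  have hK : ∀ j : ℕ, ∃ K : Set E, IsCompact K ∧ p Kᶜ ≤ ε' j / D ^ (j + 1) := by
    intro j
    obtain ⟨K, hK, h⟩ := hp (ε' j / D ^ (j + 1))
      (ENNReal.div_pos (hε' j).ne' (ENNReal.pow_ne_top hDt))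
    exact ⟨K, hK, h p rfl⟩
  choose K hKc hKp using hK
  refine ⟨Set.univ.pi K, isCompact_univ_pi hKc, ?_⟩
  rintro _ ⟨n, rfl⟩
  have hsub : (Set.univ.pi K)ᶜ ⊆ ⋃ j, (fun x : ℕ → E => x j) ⁻¹' (K j)ᶜ := by
    intro x hx
    simpa [Set.mem_pi] using hx
  calc seqM p f n (Set.univ.pi K)ᶜ ≤ seqM p f n (⋃ j, (fun x : ℕ → E => x j) ⁻¹' (K j)ᶜ) :=
        measure_mono hsub
    _ ≤ ∑' j, seqM p f n ((fun x : ℕ → E => x j) ⁻¹' (K j)ᶜ) := measure_iUnion_le _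
    _ ≤ ∑' j, ε' j := by
      refine ENNReal.tsum_le_tsum fun j => ?_
      refine (seqM_marginal p hf hB0 hB n j (hKc j).isClosed.measurableSet.compl).trans ?_
      calc _ ≤ D ^ (j + 1) * (ε' j / D ^ (j + 1)) := by gcongr; exact hKp j
        _ = ε' j := ENNReal.mul_div_cancel (pow_ne_zero _ hD0) (ENNReal.pow_ne_top hDt)
    _ ≤ ε := hsum.le

end Aux

/-- Existence and uniqueness of the conformal measure: there exists a
unique Borel probability measure `ν` and a `λ > 0` with `L_f^* ν = λ ν`; moreover
`λ = ∫ L_f 1 dν`. -/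
theorem statement5 {E : Type*} [MetricSpace E] [CompleteSpace E]
    [TopologicalSpace.SeparableSpace E] [MeasurableSpace E] [BorelSpace E] [Nonempty E]
    (p : Measure E) [IsProbabilityMeasure p]
    (α : ℝ) (hα0 : 0 < α) (hα1 : α < 1)
    (f : (ℕ → E) → ℝ) (hf : MemHol α f) :
    ∃ (ν : Measure (ℕ → E)) (lam : ℝ), IsProbabilityMeasure ν ∧ 0 < lam ∧
      (∀ φ : (ℕ → E) → ℝ, MemCb φ → (∫ x, ruelle p f φ x ∂ν) = lam * ∫ x, φ x ∂ν) ∧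
      lam = (∫ x, ruelle p f (fun _ => 1) x ∂ν) ∧
      ∀ (ν' : Measure (ℕ → E)) (lam' : ℝ), IsProbabilityMeasure ν' → 0 < lam' →
        (∀ φ : (ℕ → E) → ℝ, MemCb φ → (∫ x, ruelle p f φ x ∂ν') = lam' * ∫ x, φ x ∂ν') →
        ν' = ν ∧ lam' = lam := by

  have : SecondCountableTopology E := UniformSpace.secondCountable_of_separable E
  obtain ⟨hfc, hfb, C₀, hC₀⟩ := hf
  have hfm : MemCb f := ⟨hfc, hfb⟩
  obtain ⟨C, hC0, hC⟩ : ∃ C, 0 ≤ C ∧ HolderConst α C f := by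
    refine ⟨|C₀|, abs_nonneg _, fun x y => (hC₀ x y).trans ?_⟩
    have : 0 ≤ dX x y ^ α := Real.rpow_nonneg (dX_nonneg _ _) _
    gcongr
    exact le_abs_self _
  have hr0 : 0 < (1 / 2 : ℝ) ^ α := by positivity
  have hr1 : (1 / 2 : ℝ) ^ α < 1 := Real.rpow_lt_one (by norm_num) (by norm_num) hα0
  obtain ⟨K, hK0, h1⟩ : ∃ K, 0 ≤ K ∧ (C + K) * (1 / 2 : ℝ) ^ α < K := by
    set r := (1 / 2 : ℝ) ^ α
    have h1r : 0 < 1 - r := by linarith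
    refine ⟨(C + 1) / (1 - r), by positivity, ?_⟩
    have e : (C + 1) / (1 - r) * (1 - r) = C + 1 := by field_simp
    nlinarith
  have h0 : 0 ≤ (C + K) * (1 / 2 : ℝ) ^ α := by positivity
  -- the limiting functional
  have hconv : ∀ k φ, LCone α K k φ → ∃ c : ℝ,
      Tendsto (fun n => ∫ x, φ x ∂(seqM p f n)) atTop (𝓝 c) ∧
      ∀ (ν' : Measure (ℕ → E)) (lam' : ℝ), IsProbabilityMeasure ν' → 0 < lam' →
        (∀ φ : (ℕ → E) → ℝ, MemCb φ → (∫ x, ruelle p f φ x ∂ν') = lam' * ∫ x, φ x ∂ν') →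
        ∫ x, φ x ∂ν' = c := by
    intro k φ hφ
    obtain ⟨c, ε, hε, h⟩ := hφ.converge_one p hα0 hfm hC h0 h1
    have hint : ∀ (μ : Measure (ℕ → E)) [IsProbabilityMeasure μ] (n : ℕ),
        |(∫ x, (ruelle p f)^[n + k] φ x ∂μ) / (∫ x, (ruelle p f)^[n + k] (fun _ => 1) x ∂μ) - c|
          ≤ ε n := by
      intro μ _ n
      have hpos := integral_iterate_one_pos p hfm (n + k) μ
      have i1 := (memCb_iterate p hfm hφ.1 (n + k)).integrable μ
      have i2 := (memCb_iterate p hfm (memCb_const 1) (n + k)).integrable μ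
      rw [div_sub' hpos.ne', abs_div, abs_of_pos hpos, div_le_iff₀ hpos, mul_comm _ c,
        ← integral_const_mul, ← integral_sub i1 (i2.const_mul c), ← integral_const_mul]
      refine (abs_integral_le_integral_abs).trans ?_
      exact integral_mono (i1.sub (i2.const_mul c)).abs (i2.const_mul _) fun x => h n x
    refine ⟨c, ?_, ?_⟩
    · rw [← tendsto_add_atTop_iff_nat k, tendsto_iff_norm_sub_tendsto_zero]
      refine squeeze_zero (fun n => norm_nonneg _) (fun n => ?_) hε
      have := isProbabilityMeasure_seqM p hfm 0
      rw [integral_seqM p hfm hφ.1]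
      exact hint (seqM p f 0) n
    · intro ν' lam' hν' hl hev
      have hit : ∀ n ψ, MemCb ψ → ∫ x, (ruelle p f)^[n] ψ x ∂ν' = lam' ^ n * ∫ x, ψ x ∂ν' := by
        intro n
        induction n with
        | zero => intro ψ _; simp
        | succ n ih =>
          intro ψ hψ
          rw [Function.iterate_succ_apply, ih _ (memCb_ruelle p hfm hψ), hev ψ hψ, pow_succ]
          ring
      have hb : ∀ n, |∫ x, φ x ∂ν' - c| ≤ ε n := by
        intro n
        have := hint ν' n
        rw [hit _ _ hφ.1, hit _ _ (memCb_const 1)] at this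
        have hl' : lam' ^ (n + k) ≠ 0 := by positivity
        simpa [hl'] using this
      have : |∫ x, φ x ∂ν' - c| ≤ 0 := ge_of_tendsto' hε hb
      exact sub_eq_zero.1 (abs_eq_zero.1 (le_antisymm this (abs_nonneg _)))
  -- the limiting measure
  let m : ℕ → ProbabilityMeasure (ℕ → E) := fun n => ⟨seqM p f n, isProbabilityMeasure_seqM p hfm n⟩
  have hcomp : IsCompact (closure (Set.range m)) := by
    refine isCompact_closure_of_isTightMeasureSet ((tight_seqM p hfm).subset ?_)
    rintro _ ⟨_, ⟨n, rfl⟩, rfl⟩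
    exact ⟨n, rfl⟩
  obtain ⟨ν, -, hν⟩ := hcomp.ultrafilter_le_nhds ((hyperfilter ℕ).map m) (by
    rw [le_principal_iff]
    exact Filter.mem_map.2 (Filter.univ_mem' fun n => subset_closure ⟨n, rfl⟩))
  have hν' : Tendsto m (hyperfilter ℕ : Filter ℕ) (𝓝 ν) := hν
  have hνint : ∀ k φ, LCone α K k φ →
      Tendsto (fun n => ∫ x, φ x ∂(seqM p f n)) atTop (𝓝 (∫ x, φ x ∂(ν : Measure (ℕ → E)))) := by
    intro k φ hφ
    obtain ⟨c, hc, -⟩ := hconv k φ hφ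
    obtain ⟨M, hM⟩ := hφ.1.2
    let g : (ℕ → E) →ᵇ ℝ := BoundedContinuousFunction.ofNormedAddCommGroup φ hφ.1.1 M hM
    have h2 := (ProbabilityMeasure.tendsto_iff_forall_integral_tendsto.1 hν') g
    have h3 := hc.mono_left (Nat.hyperfilter_le_atTop)
    have := tendsto_nhds_unique h3 h2
    rw [this] at hc
    exact hc
  have hone : LCone α K 0 (fun _ : ℕ → E => (1 : ℝ)) := by
    refine ⟨memCb_const 1, by simp, fun x y _ => ?_⟩
    have : 0 ≤ dX x y ^ α := Real.rpow_nonneg (dX_nonneg _ _) _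
    rw [mul_one]
    exact Real.one_le_exp (mul_nonneg hK0 this)
  set lam := ∫ x, ruelle p f (fun _ => 1) x ∂(ν : Measure (ℕ → E)) with hlam
  have hlam0 : 0 < lam := integral_iterate_one_pos p hfm 1 (ν : Measure (ℕ → E))
  have hL1 := hνint _ _ ((hone.step p hα0 hfm hC).mono h1.le)
  have hcone : ∀ k φ, LCone α K k φ → ∫ x, ruelle p f φ x ∂(ν : Measure (ℕ → E)) =
      lam * ∫ x, φ x ∂(ν : Measure (ℕ → E)) := by
    intro k φ hφ
    have t1 := hνint _ _ ((hφ.step p hα0 hfm hC).mono h1.le)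
    have t2 := (tendsto_add_atTop_iff_nat 1).2 (hνint _ _ hφ)
    refine tendsto_nhds_unique t1 ((hL1.mul t2).congr fun n => ?_)
    have hp := isProbabilityMeasure_seqM p hfm n
    have e : seqM p f (n + 1) = normM p f (seqM p f n) := by
      unfold seqM; rw [Function.iterate_succ_apply']
    rw [e, integral_normM p hfm hφ.1]
    have : 0 < ∫ x, ruelle p f (fun _ => 1) x ∂(seqM p f n) :=
      integral_iterate_one_pos p hfm 1 (seqM p f n)
    field_simp
  have hfin := isFiniteMeasure_dualM p hfm (ν : Measure (ℕ → E))
  have hdual : dualM p f (ν : Measure (ℕ → E)) = ENNReal.ofReal lam • (ν : Measure (ℕ → E)) := by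
    have : IsFiniteMeasure (ENNReal.ofReal lam • (ν : Measure (ℕ → E))) :=
      Measure.smul_finite _ ENNReal.ofReal_ne_top
    refine ext_of_cone (α := α) hK0 fun k φ hφ => ?_
    rw [integral_dualM p hfm hφ.1, hcone k φ hφ, integral_smul_measure,
      ENNReal.toReal_ofReal hlam0.le, smul_eq_mul]
  have hev : ∀ φ : (ℕ → E) → ℝ, MemCb φ → (∫ x, ruelle p f φ x ∂(ν : Measure (ℕ → E))) =
      lam * ∫ x, φ x ∂(ν : Measure (ℕ → E)) := by
    intro φ hφ
    rw [← integral_dualM p hfm hφ, hdual, integral_smul_measure,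
      ENNReal.toReal_ofReal hlam0.le, smul_eq_mul]
  refine ⟨ν, lam, inferInstance, hlam0, hev, hlam, fun ν' lam' hp' hl' hev' => ?_⟩
  have heq : ν' = ν := by
    refine ext_of_cone (α := α) hK0 fun k φ hφ => ?_
    obtain ⟨c, -, hc⟩ := hconv k φ hφ
    rw [hc ν' lam' hp' hl' hev', hc ν lam inferInstance hlam0 hev]
  refine ⟨heq, ?_⟩
  have := hev' (fun _ => 1) (memCb_const 1)
  rw [heq] at this
  rw [hlam, this]
  simp

end
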